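/- There exists a constant c > 0, independent of n, such that for every n ≥ 1 the 1-skeleton resistance satisfies R_n^T ≤ c · (4/5)^n. -/

import Mathlib

/-!
Any potential `f` on the vertices of `T_{n+1}` restricts to the vertices of `T_n`. Giving each
triangle the sum of the squared differences of `f` along its three edges (`triE`), barycentric
subdivision of one triangle multiplies this energy by at least `5 / 4`, whatever the values of `f`
at the three midpoints and the barycenter (`triE_child`, an explicit sum of squares). Hence the
total over the `n`-fold subdivision of a triangle `t` is at least `(5 / 4) ^ n * triE f t`
(`energy_desc`).

The sum over triangles is at most a constant times the energy of the graph (`sum_le_energy`),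
because an edge lies in at most two triangles (`Good.count`). This is a planar fact: the triangles
of a subdivision are nondegenerate and have pairwise disjoint interiors (`good_desc`; the six
subtriangles correspond to the six orderings of the barycentric coordinates), whereas two triangles
on the same side of a common edge have overlapping interiors (`exists_common`).

It suffices to apply this to the two opposite sectors of the hexagon adjacent to the sides `2`
and `5`: `f` is `0` at two vertices of one and `1` at two vertices of the other, and they share the
center, so their energies add up to at least `1`. This bounds every admissible energy below by
`(5 / 4) ^ (n - 1) / 8`.
-/

/-!
Setup for the barycentric subdivision / hexacarpet resistance problem
(Begué, Kelleher, Nelson, Panzo, Pellico, Teplyaev, "Resistance scaling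
and the number of spanning trees ..." / Barlow–Bass type estimates).

We realize the repeated barycentric subdivision of a triangle via its
hexagonal planar embedding: for `n ≥ 1` the complex `T_n` is embedded
in the plane with the seven vertices of `T_1` sent to the corners and
the center of a regular hexagon, and deeper subdivisions computed by
taking barycenters.  The `n`-th level triangles are recorded as ordered
triples of points of the plane.
-/

noncomputable section

namespace BarycentricHexacarpet

attribute [local instance] Classical.propDecidable

/-- Points of the plane. -/
abbrev Pt : Type := ℝ × ℝ

/-- Barycenter of three points. -/
def bary (a b c : Pt) : Pt := (3:ℝ)⁻¹ • (a + b + c)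

/-- Midpoint (barycenter of an edge). -/
def mpt (a b : Pt) : Pt := (2:ℝ)⁻¹ • (a + b)

/-- The six triangles of the barycentric subdivision of the triangle `(a,b,c)`,
each recorded as (vertex, barycenter of an edge containing it, barycenter). -/
def children : Pt × Pt × Pt → Set (Pt × Pt × Pt) := fun t =>
  {(t.1, mpt t.1 t.2.1, bary t.1 t.2.1 t.2.2), (t.2.1, mpt t.1 t.2.1, bary t.1 t.2.1 t.2.2),
   (t.2.1, mpt t.2.1 t.2.2, bary t.1 t.2.1 t.2.2), (t.2.2, mpt t.2.1 t.2.2, bary t.1 t.2.1 t.2.2),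
   (t.1, mpt t.1 t.2.2, bary t.1 t.2.1 t.2.2), (t.2.2, mpt t.1 t.2.2, bary t.1 t.2.1 t.2.2)}

/-- The corners of the regular hexagon: `p_0, p_0', p_1, p_1', p_2, p_2'`
are the corners with indices `0, 1, 2, 3, 4, 5`. -/
def hexCorner (i : ℕ) : Pt := (Real.cos (i * (Real.pi / 3)), Real.sin (i * (Real.pi / 3)))

/-- The set of (ordered) triangles of the `n`-th barycentric subdivision `T_n`
of the triangle, in the hexagonal embedding (defined for `n ≥ 1`):  the six
triangles of `T_1` are the six sectors of the regular hexagon, and each further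
subdivision is barycentric. -/
def TriSet : ℕ → Set (Pt × Pt × Pt)
  | 0 => ∅
  | 1 => {t | ∃ i : Fin 6, t = (hexCorner i, hexCorner (i + 1), ((0:ℝ), (0:ℝ)))}
  | (n + 2) => ⋃ t ∈ TriSet (n + 1), children t

/-- `E_n^2`: the 2-simplexes (triangles) of `T_n`, as 3-element vertex sets. -/
def Simp2 (n : ℕ) : Set (Set Pt) :=
  {s | ∃ t ∈ TriSet n, s = {t.1, t.2.1, t.2.2}}

/-- `E_n^1`: the 1-simplexes (edges) of `T_n`, as 2-element vertex sets. -/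
def Simp1 (n : ℕ) : Set (Set Pt) :=
  {s | ∃ t ∈ TriSet n, s = {t.1, t.2.1} ∨ s = {t.2.1, t.2.2} ∨ s = {t.1, t.2.2}}

/-- `E_n^0`: the 0-simplexes (vertices) of `T_n`. -/
def Simp0 (n : ℕ) : Set Pt :=
  {p | ∃ t ∈ TriSet n, p = t.1 ∨ p = t.2.1 ∨ p = t.2.2}

/-- Conductances of the 1-skeleton graph `G_n^T`:  vertices `p ≠ q` are adjacent
iff `{p,q}` is an edge of `T_n`; the conductance is `2` if the edge is contained
in exactly one triangle of `T_n`, and `1` if it is contained in two triangles. -/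
def cT (n : ℕ) (p q : Pt) : ℝ :=
  if p ≠ q ∧ ({p, q} : Set Pt) ∈ Simp1 n then
    (if {f ∈ Simp2 n | p ∈ f ∧ q ∈ f}.ncard = 1 then 2 else 1)
  else 0

/-- Conductances of the (modified) hexacarpet graph `G_n^H`:  its vertex set is
`E_n^2 ∪ E_n^1`, an edge `e ∈ E_n^1` is adjacent to a triangle `f ∈ E_n^2` iff
`e` is a face of `f`, and every edge of the graph has conductance `1/2`. -/
def cH (n : ℕ) (u v : Set Pt) : ℝ :=
  if (u ∈ Simp1 n ∧ v ∈ Simp2 n ∧ u ⊆ v) ∨ (v ∈ Simp1 n ∧ u ∈ Simp2 n ∧ v ⊆ u)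
  then 1 / 2 else 0

/-- The energy of a potential `f` on a weighted graph with conductances `c`:
`E(f) = (1/2) ∑ c p q * (f p - f q)^2`. -/
def energy {V : Type} (c : V → V → ℝ) (f : V → ℝ) : ℝ :=
  (1 / 2) * ∑' p : V, ∑' q : V, c p q * (f p - f q) ^ 2

/-- The effective resistance between `A` and `B`:
`R(A,B) = (inf {E(f) : f ≡ 0 on A, f ≡ 1 on B})⁻¹`. -/
def effRes {V : Type} (c : V → V → ℝ) (A B : Set V) : ℝ :=
  (sInf {e : ℝ | ∃ f : V → ℝ, (∀ p ∈ A, f p = 0) ∧ (∀ p ∈ B, f p = 1) ∧ e = energy c f})⁻¹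

/-- The `i`-th closed side of the hexagon. -/
def hexSide (i : ℕ) : Set Pt := segment ℝ (hexCorner i) (hexCorner (i + 1))

/-- `L_i^{(n,T)}`: the vertices of `G_n^T` whose geometric realization lies in
the `i`-th closed side of the hexagon. -/
def LsetT (n i : ℕ) : Set Pt := {p ∈ Simp0 n | p ∈ hexSide i}

/-- `L_i^{(n,H)}`: the vertices of `G_n^H` whose geometric realization lies in
the `i`-th closed side of the hexagon. -/
def LsetH (n i : ℕ) : Set (Set Pt) :=
  {v ∈ Simp2 n ∪ Simp1 n | convexHull ℝ v ⊆ hexSide i}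

/-- `R_n^T`: the effective resistance in `G_n^T` between
`A_{(n)}^T = L_2^{(n,T)}` and `B_{(n)}^T = L_5^{(n,T)}`. -/
def RT (n : ℕ) : ℝ := effRes (cT n) (LsetT n 2) (LsetT n 5)

/-- `R_n`: the effective resistance in `G_n^H` between
`A_{(n)}^H = L_0^{(n,H)} ∪ L_1^{(n,H)}` and `B_{(n)}^H = L_3^{(n,H)} ∪ L_4^{(n,H)}`. -/
def RH (n : ℕ) : ℝ :=
  effRes (cH n) (LsetH n 0 ∪ LsetH n 1) (LsetH n 3 ∪ LsetH n 4)

end BarycentricHexacarpet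

namespace BarycentricHexacarpet

attribute [local instance] Classical.propDecidable

/-- Ordered triangles in the plane. -/
abbrev Tri : Type := Pt × Pt × Pt

/-! ### Energies of triangles and subdivision -/

/-- The energy of `f` on a single triangle, with unit conductances on its three edges. -/
def triE (f : Pt → ℝ) (t : Tri) : ℝ :=
  (f t.1 - f t.2.1) ^ 2 + (f t.2.1 - f t.2.2) ^ 2 + (f t.1 - f t.2.2) ^ 2

/-- The `i`-th of the six triangles listed in `children t`. -/
def child (i : Fin 6) (t : Tri) : Tri :=
  ![(t.1, mpt t.1 t.2.1, bary t.1 t.2.1 t.2.2), (t.2.1, mpt t.1 t.2.1, bary t.1 t.2.1 t.2.2),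
   (t.2.1, mpt t.2.1 t.2.2, bary t.1 t.2.1 t.2.2), (t.2.2, mpt t.2.1 t.2.2, bary t.1 t.2.1 t.2.2),
   (t.1, mpt t.1 t.2.2, bary t.1 t.2.1 t.2.2), (t.2.2, mpt t.1 t.2.2, bary t.1 t.2.1 t.2.2)] i

theorem child_mem (i : Fin 6) (t : Tri) : child i t ∈ children t := by
  fin_cases i <;> simp [child, children]

/-- Subdividing one triangle multiplies its energy by at least `5 / 4`. -/
theorem triE_child (f : Pt → ℝ) (t : Tri) :
    5 / 4 * triE f t ≤ ∑ i : Fin 6, triE f (child i t) := by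
  obtain ⟨a, b, c⟩ := t
  simp only [Fin.sum_univ_succ, child, triE]
  simp
  generalize f (mpt a b) = x
  generalize f (mpt b c) = y
  generalize f (mpt a c) = z
  generalize f (bary a b c) = g
  generalize f a = a
  generalize f b = b
  generalize f c = c
  -- The difference of the two sides is exactly the sum of these squares, the first three
  -- multiplied by `4`; they vanish at the energy-minimizing values of `x, y, z, g`.
  nlinarith [sq_nonneg (x - (a + b + 2 * g) / 4), sq_nonneg (y - (b + c + 2 * g) / 4),
    sq_nonneg (z - (a + c + 2 * g) / 4), sq_nonneg (a + b + c - 3 * g)]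

/-! ### Interiors of triangles -/

/-- Twice the signed area of the triangle `p q r`. -/
def area (p q r : Pt) : ℝ :=
  (q.1 - p.1) * (r.2 - p.2) - (q.2 - p.2) * (r.1 - p.1)

/-- `x` is a convex combination of `p, q, r` with positive weights, i.e. it lies in the open
triangle `p q r`. -/
def InT (p q r x : Pt) : Prop :=
  ∃ α β γ : ℝ, 0 < α ∧ 0 < β ∧ 0 < γ ∧ α + β + γ = 1 ∧
    x.1 = α * p.1 + β * q.1 + γ * r.1 ∧ x.2 = α * p.2 + β * q.2 + γ * r.2

/-- Barycentric coordinates with respect to a nondegenerate triangle are unique. -/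
theorem coord_unique {p q r : Pt} (h : area p q r ≠ 0) {α β γ α' β' γ' : ℝ}
    (hs : α + β + γ = 1) (hs' : α' + β' + γ' = 1)
    (h1 : α * p.1 + β * q.1 + γ * r.1 = α' * p.1 + β' * q.1 + γ' * r.1)
    (h2 : α * p.2 + β * q.2 + γ * r.2 = α' * p.2 + β' * q.2 + γ' * r.2) :
    α = α' ∧ β = β' ∧ γ = γ' := by
  have ha : α = 1 - β - γ := by linarith
  have ha' : α' = 1 - β' - γ' := by linarith
  subst ha ha'
  have hb : (β - β') * area p q r = 0 := by
    unfold area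
    linear_combination (r.2 - p.2) * h1 - (r.1 - p.1) * h2
  have hc : (γ - γ') * area p q r = 0 := by
    unfold area
    linear_combination (q.1 - p.1) * h2 - (q.2 - p.2) * h1
  have hb' := (mul_eq_zero.1 hb).resolve_right h
  have hc' := (mul_eq_zero.1 hc).resolve_right h
  refine ⟨?_, ?_, ?_⟩ <;> linarith

/-- Strict orderings of the barycentric coordinates; the interior of `child i t` is the part of
the interior of `t` where the coordinates are ordered according to `ord i`. -/
def ord (i : Fin 6) (α β γ : ℝ) : Prop :=
  ![β < α ∧ γ < β, α < β ∧ γ < α, γ < β ∧ α < γ, β < γ ∧ α < β, γ < α ∧ β < γ,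
    α < γ ∧ β < α] i

theorem ord_unique {i j : Fin 6} {α β γ : ℝ} (hi : ord i α β γ) (hj : ord j α β γ) : i = j := by
  fin_cases i <;> fin_cases j <;> simp [ord] at hi hj ⊢ <;> linarith [hi.1, hi.2, hj.1, hj.2]

theorem InT_child {i : Fin 6} {t : Tri} {x : Pt}
    (h : InT (child i t).1 (child i t).2.1 (child i t).2.2 x) :
    ∃ α β γ : ℝ, ord i α β γ ∧ 0 < α ∧ 0 < β ∧ 0 < γ ∧ α + β + γ = 1 ∧
      x.1 = α * t.1.1 + β * t.2.1.1 + γ * t.2.2.1 ∧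
      x.2 = α * t.1.2 + β * t.2.1.2 + γ * t.2.2.2 := by
  obtain ⟨u, v, w, hu, hv, hw, hs, h1, h2⟩ := h
  fin_cases i
  · refine ⟨u + v / 2 + w / 3, v / 2 + w / 3, w / 3, ?_⟩
    simp [ord, child, mpt, bary] at h1 h2 ⊢
    refine ⟨?_, ?_, ?_, ?_, ?_, ?_, ?_⟩ <;> (try constructor) <;> linarith
  · refine ⟨v / 2 + w / 3, u + v / 2 + w / 3, w / 3, ?_⟩
    simp [ord, child, mpt, bary] at h1 h2 ⊢
    refine ⟨?_, ?_, ?_, ?_, ?_, ?_, ?_⟩ <;> (try constructor) <;> linarith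
  · refine ⟨w / 3, u + v / 2 + w / 3, v / 2 + w / 3, ?_⟩
    simp [ord, child, mpt, bary] at h1 h2 ⊢
    refine ⟨?_, ?_, ?_, ?_, ?_, ?_, ?_⟩ <;> (try constructor) <;> linarith
  · refine ⟨w / 3, v / 2 + w / 3, u + v / 2 + w / 3, ?_⟩
    simp [ord, child, mpt, bary] at h1 h2 ⊢
    refine ⟨?_, ?_, ?_, ?_, ?_, ?_, ?_⟩ <;> (try constructor) <;> linarith
  · refine ⟨u + v / 2 + w / 3, w / 3, v / 2 + w / 3, ?_⟩
    simp [ord, child, mpt, bary] at h1 h2 ⊢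
    refine ⟨?_, ?_, ?_, ?_, ?_, ?_, ?_⟩ <;> (try constructor) <;> linarith
  · refine ⟨v / 2 + w / 3, w / 3, u + v / 2 + w / 3, ?_⟩
    simp [ord, child, mpt, bary] at h1 h2 ⊢
    refine ⟨?_, ?_, ?_, ?_, ?_, ?_, ?_⟩ <;> (try constructor) <;> linarith

theorem area_child (i : Fin 6) (t : Tri) :
    area (child i t).1 (child i t).2.1 (child i t).2.2 = area t.1 t.2.1 t.2.2 / 6 ∨
    area (child i t).1 (child i t).2.1 (child i t).2.2 = - area t.1 t.2.1 t.2.2 / 6 := by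
  fin_cases i <;> simp [area, child, mpt, bary]
  · left; ring
  · right; ring
  · left; ring
  · right; ring
  · right; ring
  · left; ring

/-- Two nondegenerate triangles lying on the same side of a common edge have a common interior
point. -/
theorem exists_common {p q r r' : Pt} (h : 0 < area p q r * area p q r') :
    ∃ x, InT p q r x ∧ InT p q r' x := by
  have h0 : area p q r' ≠ 0 := right_ne_zero_of_mul h.ne'
  -- `α, β, γ` are the barycentric coordinates of `r` with respect to `p, q, r'`.
  obtain ⟨α, hα⟩ : ∃ α, α = area r q r' / area p q r' := ⟨_, rfl⟩
  obtain ⟨β, hβ⟩ : ∃ β, β = area p r r' / area p q r' := ⟨_, rfl⟩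
  obtain ⟨γ, hγ⟩ : ∃ γ, γ = area p q r / area p q r' := ⟨_, rfl⟩
  have hγ0 : 0 < γ := by
    rw [hγ]
    rcases pos_and_pos_or_neg_and_neg_of_mul_pos h with ⟨h1, h2⟩ | ⟨h1, h2⟩
    · exact div_pos h1 h2
    · exact div_pos_of_neg_of_neg h1 h2
  have hs : α + β + γ = 1 := by
    rw [hα, hβ, hγ, ← add_div, ← add_div, div_eq_one_iff_eq h0]
    unfold area; ring
  have h1 : r.1 = α * p.1 + β * q.1 + γ * r'.1 := by
    rw [hα, hβ, hγ]; field_simp; unfold area; ring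
  have h2 : r.2 = α * p.2 + β * q.2 + γ * r'.2 := by
    rw [hα, hβ, hγ]; field_simp; unfold area; ring
  clear hα hβ hγ
  -- A point close to the midpoint of the edge, pushed slightly towards `r`.
  obtain ⟨ε, hε⟩ : ∃ ε, ε = 1 / (2 + 2 * |α| + 2 * |β|) := ⟨_, rfl⟩
  have hd : 0 < 2 + 2 * |α| + 2 * |β| := by positivity
  have hε0 : 0 < ε := by rw [hε]; positivity
  have hεm : ε * (2 + 2 * |α| + 2 * |β|) = 1 := by rw [hε]; field_simp
  have e1 : 0 ≤ ε * (α + |α|) := mul_nonneg hε0.le (by linarith [neg_abs_le α])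
  have e2 : 0 ≤ ε * (β + |β|) := mul_nonneg hε0.le (by linarith [neg_abs_le β])
  have e3 : 0 ≤ ε * |α| := by positivity
  have e4 : 0 ≤ ε * |β| := by positivity
  refine ⟨((1 - ε) / 2 * p.1 + (1 - ε) / 2 * q.1 + ε * r.1,
    (1 - ε) / 2 * p.2 + (1 - ε) / 2 * q.2 + ε * r.2),
    ⟨(1 - ε) / 2, (1 - ε) / 2, ε, by nlinarith, by nlinarith, hε0, by ring, rfl, rfl⟩,
    ⟨(1 - ε) / 2 + ε * α, (1 - ε) / 2 + ε * β, ε * γ, by nlinarith, by nlinarith,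
      by positivity, ?_, ?_, ?_⟩⟩
  · linear_combination ε * hs
  · rw [h1]; ring
  · rw [h2]; ring

/-! ### Families of triangles with disjoint interiors -/

/-- The triangles obtained from `t` after `n` barycentric subdivisions. -/
def desc (t : Tri) : ℕ → Finset Tri
  | 0 => {t}
  | n + 1 => (desc t n ×ˢ (Finset.univ : Finset (Fin 6))).image fun x => child x.2 x.1

/-- A finite family of nondegenerate triangles with pairwise disjoint interiors. -/
def Good (D : Finset Tri) : Prop :=
  (∀ s ∈ D, area s.1 s.2.1 s.2.2 ≠ 0) ∧
    ∀ s ∈ D, ∀ s' ∈ D, ∀ x, InT s.1 s.2.1 s.2.2 x → InT s'.1 s'.2.1 s'.2.2 x → s = s'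

theorem Good.child_unique {D : Finset Tri} (hD : Good D) {s s' : Tri} (hs : s ∈ D) (hs' : s' ∈ D)
    {i j : Fin 6} {x : Pt} (h : InT (child i s).1 (child i s).2.1 (child i s).2.2 x)
    (h' : InT (child j s').1 (child j s').2.1 (child j s').2.2 x) : s = s' ∧ i = j := by
  obtain ⟨α, β, γ, ho, ha, hb, hc, hsum, h1, h2⟩ := InT_child h
  obtain ⟨α', β', γ', ho', ha', hb', hc', hsum', h1', h2'⟩ := InT_child h'
  have hss : s = s' := hD.2 s hs s' hs' x ⟨α, β, γ, ha, hb, hc, hsum, h1, h2⟩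
    ⟨α', β', γ', ha', hb', hc', hsum', h1', h2'⟩
  subst hss
  obtain ⟨rfl, rfl, rfl⟩ := coord_unique (hD.1 s hs) hsum hsum' (h1.symm.trans h1')
    (h2.symm.trans h2')
  exact ⟨rfl, ord_unique ho ho'⟩

theorem Good.injOn {D : Finset Tri} (hD : Good D) :
    Set.InjOn (fun x : Tri × Fin 6 => child x.2 x.1)
      (D ×ˢ (Finset.univ : Finset (Fin 6)) : Finset (Tri × Fin 6)) := by
  rintro ⟨s, i⟩ hs ⟨s', j⟩ hs' h
  simp at hs hs' h
  have key : ∀ a b c : Pt, InT a b c (bary a b c) := fun a b c =>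
    ⟨3⁻¹, 3⁻¹, 3⁻¹, by norm_num, by norm_num, by norm_num, by norm_num,
      by simp [bary], by simp [bary]⟩
  have hx := key (child i s).1 (child i s).2.1 (child i s).2.2
  obtain ⟨rfl, rfl⟩ := hD.child_unique hs hs' hx (by rw [← h]; exact hx)
  rfl

theorem good_desc {t : Tri} (ht : area t.1 t.2.1 t.2.2 ≠ 0) (n : ℕ) : Good (desc t n) := by
  induction n with
  | zero => simp [desc, Good, ht]
  | succ n ih =>
    constructor
    · intro s hs
      simp only [desc, Finset.mem_image, Finset.mem_product, Finset.mem_univ, and_true] at hs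
      obtain ⟨⟨u, i⟩, hu, rfl⟩ := hs
      have := ih.1 u hu
      rcases area_child i u with h | h <;> rw [h] <;> simpa using this
    · intro s hs s' hs' x hx hx'
      simp only [desc, Finset.mem_image, Finset.mem_product, Finset.mem_univ, and_true] at hs hs'
      obtain ⟨⟨u, i⟩, hu, rfl⟩ := hs
      obtain ⟨⟨u', i'⟩, hu', rfl⟩ := hs'
      obtain ⟨h1, h2⟩ := ih.child_unique hu hu' hx hx'
      simp only at h1 h2
      rw [h1, h2]

theorem energy_desc {t : Tri} (ht : area t.1 t.2.1 t.2.2 ≠ 0) (f : Pt → ℝ) (n : ℕ) :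
    (5 / 4 : ℝ) ^ n * triE f t ≤ ∑ s ∈ desc t n, triE f s := by
  induction n with
  | zero => simp [desc]
  | succ n ih =>
    rw [desc, Finset.sum_image (good_desc ht n).injOn, Finset.sum_product]
    calc (5 / 4 : ℝ) ^ (n + 1) * triE f t = 5 / 4 * ((5 / 4 : ℝ) ^ n * triE f t) := by ring
      _ ≤ 5 / 4 * ∑ s ∈ desc t n, triE f s := by gcongr
      _ = ∑ s ∈ desc t n, 5 / 4 * triE f s := Finset.mul_sum ..
      _ ≤ _ := Finset.sum_le_sum fun s _ => triE_child f s

/-! ### Counting triangles at an edge -/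

/-- The three edges of a triangle, oriented. -/
def edges (t : Tri) : Finset (Pt × Pt) := {(t.1, t.2.1), (t.2.1, t.2.2), (t.1, t.2.2)}

theorem area_ne {p q r : Pt} (h : area p q r ≠ 0) : p ≠ q ∧ q ≠ r ∧ p ≠ r := by
  refine ⟨?_, ?_, ?_⟩ <;> rintro rfl <;> apply h <;> unfold area <;> ring

theorem triE_eq {t : Tri} (ht : area t.1 t.2.1 t.2.2 ≠ 0) (f : Pt → ℝ) :
    triE f t = ∑ e ∈ edges t, (f e.1 - f e.2) ^ 2 := by
  obtain ⟨a, b, c⟩ := t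
  obtain ⟨h1, h2, h3⟩ := area_ne ht
  simp only at h1 h2 h3
  unfold edges triE
  rw [Finset.sum_insert, Finset.sum_pair]
  · ring
  · simp [h1.symm]
  · simp [h1, h2]

theorem exists_third {t : Tri} {e : Pt × Pt} (he : e ∈ edges t)
    (ht : area t.1 t.2.1 t.2.2 ≠ 0) :
    ∃ r, area e.1 e.2 r ≠ 0 ∧ area e.1 e.2 (bary t.1 t.2.1 t.2.2) = area e.1 e.2 r / 3 ∧
      ∀ x, InT e.1 e.2 r x → InT t.1 t.2.1 t.2.2 x := by
  obtain ⟨a, b, c⟩ := t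
  simp only [edges, Finset.mem_insert, Finset.mem_singleton] at he ht ⊢
  rcases he with rfl | rfl | rfl
  · exact ⟨c, ht, by simp [area, bary]; ring, fun _ h => h⟩
  · refine ⟨a, ?_, by simp [area, bary]; ring, ?_⟩
    · convert ht using 1; unfold area; ring
    · rintro x ⟨α, β, γ, h1, h2, h3, h4, h5, h6⟩
      refine ⟨γ, α, β, h3, h1, h2, ?_, ?_, ?_⟩ <;> simp only at * <;> linarith
  · refine ⟨b, ?_, by simp [area, bary]; ring, ?_⟩
    · intro h; apply ht; unfold area at *; linarith
    · rintro x ⟨α, β, γ, h1, h2, h3, h4, h5, h6⟩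
      refine ⟨α, γ, β, h1, h3, h2, ?_, ?_, ?_⟩ <;> simp only at * <;> linarith

/-- An edge belongs to at most two triangles of a family with disjoint interiors, one on each
side. -/
theorem Good.count {D : Finset Tri} (hD : Good D) (e : Pt × Pt) :
    (D.filter fun s => e ∈ edges s).card ≤ 2 := by
  have := Finset.card_le_card_of_injOn (s := D.filter fun s => e ∈ edges s)
    (t := (Finset.univ : Finset Bool))
    (fun s => decide (0 < area e.1 e.2 (bary s.1 s.2.1 s.2.2)))
    (fun _ _ => Finset.mem_coe.2 (Finset.mem_univ _)) ?_
  · simpa using this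
  · intro s hs s' hs' h
    rw [Finset.mem_coe, Finset.mem_filter] at hs hs'
    simp only [decide_eq_decide] at h
    obtain ⟨r, hr, hb, hI⟩ := exists_third hs.2 (hD.1 s hs.1)
    obtain ⟨r', hr', hb', hI'⟩ := exists_third hs'.2 (hD.1 s' hs'.1)
    rw [hb, hb'] at h
    have hpos : 0 < area e.1 e.2 r * area e.1 e.2 r' := by
      rcases lt_or_gt_of_ne hr with h1 | h1
      · have : ¬ 0 < area e.1 e.2 r' / 3 := fun h2 => by have := h.2 h2; linarith
        exact mul_pos_of_neg_of_neg h1 (lt_of_le_of_ne (by linarith) hr')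
      · have := h.1 (by linarith)
        exact mul_pos h1 (by linarith)
    obtain ⟨x, hx, hx'⟩ := exists_common hpos
    exact hD.2 s hs.1 s' hs'.1 x (hI x hx) (hI' x hx')

/-! ### Comparison with the energy of the graph -/

theorem triSet_finite (n : ℕ) : (TriSet n).Finite := by
  induction n with
  | zero => simp [TriSet]
  | succ n ih =>
    cases n with
    | zero =>
      have : TriSet (0 + 1) = Set.range fun i : Fin 6 =>
          ((hexCorner i, hexCorner (i + 1), ((0:ℝ), (0:ℝ))) : Tri) := by
        ext t; simp [TriSet, eq_comm]
      rw [this]; exact Set.finite_range _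
    | succ n =>
      rw [TriSet]
      exact ih.biUnion fun t _ => by simp [children]

theorem simp0_finite (n : ℕ) : (Simp0 n).Finite := by
  refine ((triSet_finite n).biUnion (t := fun t => {t.1, t.2.1, t.2.2})
    fun t _ => by simp).subset ?_
  rintro p ⟨t, ht, h⟩
  simp only [Set.mem_iUnion]
  exact ⟨t, ht, by simpa using h⟩

theorem cT_nonneg (n : ℕ) (p q : Pt) : 0 ≤ cT n p q := by
  unfold cT; split_ifs <;> norm_num

theorem cT_ne {n : ℕ} {p q : Pt} (h : cT n p q ≠ 0) : p ∈ Simp0 n ∧ q ∈ Simp0 n := by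
  have h' : ({p, q} : Set Pt) ∈ Simp1 n := by
    unfold cT at h
    split_ifs at h with h1 <;> first | exact h1.2 | exact absurd rfl h
  obtain ⟨t, ht, h'⟩ := h'
  have hsub : ({p, q} : Set Pt) ⊆ {t.1, t.2.1, t.2.2} := by
    rcases h' with h' | h' | h' <;> rw [h'] <;> intro x <;> simp <;> tauto
  have hp : p ∈ ({t.1, t.2.1, t.2.2} : Set Pt) := hsub (by simp)
  have hq : q ∈ ({t.1, t.2.1, t.2.2} : Set Pt) := hsub (by simp)
  exact ⟨⟨t, ht, by simpa using hp⟩, ⟨t, ht, by simpa using hq⟩⟩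

theorem energy_eq (n : ℕ) (f : Pt → ℝ) :
    energy (cT n) f = 1 / 2 * ∑ e ∈ (simp0_finite n).toFinset ×ˢ (simp0_finite n).toFinset,
      cT n e.1 e.2 * (f e.1 - f e.2) ^ 2 := by
  have hz : ∀ p q, (p ∉ Simp0 n ∨ q ∉ Simp0 n) → cT n p q * (f p - f q) ^ 2 = 0 := by
    intro p q h
    have : cT n p q = 0 := by
      by_contra hc
      have := cT_ne hc
      tauto
    rw [this, zero_mul]
  rw [energy, Finset.sum_product, tsum_eq_sum (s := (simp0_finite n).toFinset)]
  · congr 1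
    refine Finset.sum_congr rfl fun p _ => tsum_eq_sum fun q hq => hz p q (Or.inr ?_)
    simpa using hq
  · intro p hp
    have : ∀ q, cT n p q * (f p - f q) ^ 2 = 0 := fun q => hz p q (Or.inl (by simpa using hp))
    simp [this]

theorem edge_facts {n : ℕ} {s : Tri} (hs : s ∈ TriSet n) (ha : area s.1 s.2.1 s.2.2 ≠ 0)
    {e : Pt × Pt} (he : e ∈ edges s) : 1 ≤ cT n e.1 e.2 := by
  obtain ⟨h1, h2, h3⟩ := area_ne ha
  have : e.1 ≠ e.2 ∧ ({e.1, e.2} : Set Pt) ∈ Simp1 n := by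
    simp only [edges, Finset.mem_insert, Finset.mem_singleton] at he
    rcases he with rfl | rfl | rfl
    · exact ⟨h1, s, hs, by simp⟩
    · exact ⟨h2, s, hs, by simp⟩
    · exact ⟨h3, s, hs, by simp⟩
  unfold cT
  rw [if_pos this]
  split_ifs <;> norm_num

theorem desc_subset {t : Tri} {m : ℕ} (ht : t ∈ TriSet (m + 1)) (n : ℕ) :
    ∀ s ∈ desc t n, s ∈ TriSet (m + n + 1) := by
  induction n with
  | zero => simpa [desc] using ht
  | succ n ih =>
    intro s hs
    simp only [desc, Finset.mem_image, Finset.mem_product, Finset.mem_univ, and_true] at hs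
    obtain ⟨⟨u, i⟩, hu, rfl⟩ := hs
    change _ ∈ TriSet ((m + n) + 2)
    simp only [TriSet, Set.mem_iUnion]
    exact ⟨u, ih u hu, child_mem i u⟩

/-- The factor `4` is `2 / (1 / 2)`: at most two triangles contain a given ordered edge, and
`energy` carries a factor `1 / 2` in front of its sum over ordered pairs. -/
theorem sum_le_energy {n : ℕ} {D : Finset Tri} (hD : Good D) (hsub : ∀ s ∈ D, s ∈ TriSet n)
    (f : Pt → ℝ) : ∑ s ∈ D, triE f s ≤ 4 * energy (cT n) f := by
  set P := (simp0_finite n).toFinset ×ˢ (simp0_finite n).toFinset with hP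
  have hedge : ∀ s ∈ D, edges s ⊆ P := by
    intro s hs e he
    have h := cT_ne (zero_lt_one.trans_le (edge_facts (hsub s hs) (hD.1 s hs) he)).ne'
    simpa [hP] using h
  have h1 : ∀ s ∈ D, triE f s = ∑ e ∈ P, if e ∈ edges s then (f e.1 - f e.2) ^ 2 else 0 := by
    intro s hs
    rw [triE_eq (hD.1 s hs), ← Finset.sum_filter, Finset.filter_mem_eq_inter,
      Finset.inter_eq_right.2 (hedge s hs)]
  rw [Finset.sum_congr rfl h1, Finset.sum_comm, energy_eq]
  calc _ ≤ ∑ e ∈ P, 2 * (cT n e.1 e.2 * (f e.1 - f e.2) ^ 2) := by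
        refine Finset.sum_le_sum fun e _ => ?_
        rw [← Finset.sum_filter, Finset.sum_const, nsmul_eq_mul]
        have hc : ((D.filter fun s => e ∈ edges s).card : ℝ) ≤ 2 := by
          exact_mod_cast hD.count e
        rcases (D.filter fun s => e ∈ edges s).eq_empty_or_nonempty with h | ⟨s, hs⟩
        · rw [h]
          have := cT_nonneg n e.1 e.2
          simp only [Finset.card_empty, Nat.cast_zero, zero_mul]
          positivity
        · rw [Finset.mem_filter] at hs
          have h1 := edge_facts (hsub s hs.1) (hD.1 s hs.1) hs.2
          nlinarith [sq_nonneg (f e.1 - f e.2), mul_nonneg (sub_nonneg.2 h1)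
            (sq_nonneg (f e.1 - f e.2)), mul_nonneg (sub_nonneg.2 hc)
            (sq_nonneg (f e.1 - f e.2))]
    _ = _ := by rw [← Finset.mul_sum]; ring

/-! ### Sectors of the hexagon -/

/-- The `i`-th of the six sectors of the hexagon. -/
def sector (i : ℕ) : Tri := (hexCorner i, hexCorner (i + 1), ((0:ℝ), (0:ℝ)))

theorem area_sector (i : ℕ) : area (sector i).1 (sector i).2.1 (sector i).2.2 ≠ 0 := by
  have : area (sector i).1 (sector i).2.1 (sector i).2.2 = Real.sin (Real.pi / 3) := by
    have h := Real.sin_sub (((i + 1 : ℕ) : ℝ) * (Real.pi / 3)) (i * (Real.pi / 3))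
    have h' : ((i + 1 : ℕ) : ℝ) * (Real.pi / 3) - i * (Real.pi / 3) = Real.pi / 3 := by
      push_cast; ring
    rw [h'] at h
    rw [h]
    simp only [area, sector, hexCorner]
    ring
  rw [this, Real.sin_pi_div_three]
  positivity

theorem sector_mem {i : ℕ} (hi : i < 6) : sector i ∈ TriSet 1 := ⟨⟨i, hi⟩, rfl⟩

theorem simp0_mono {m : ℕ} {p : Pt} (hp : p ∈ Simp0 1) : p ∈ Simp0 (m + 1) := by
  induction m with
  | zero => exact hp
  | succ m ih =>
    obtain ⟨t, ht, h⟩ := ih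
    have key : ∀ i, child i t ∈ TriSet (m + 1 + 1) := fun i => by
      simp only [TriSet, Set.mem_iUnion]
      exact ⟨t, ht, child_mem i t⟩
    rcases h with rfl | rfl | rfl
    · exact ⟨_, key 0, Or.inl rfl⟩
    · exact ⟨_, key 1, Or.inl rfl⟩
    · exact ⟨_, key 3, Or.inl rfl⟩

theorem corner_mem {i : ℕ} (hi : i < 6) (m : ℕ) :
    hexCorner i ∈ LsetT (m + 1) i ∧ hexCorner (i + 1) ∈ LsetT (m + 1) i :=
  ⟨⟨simp0_mono ⟨_, sector_mem hi, Or.inl rfl⟩, left_mem_segment ..⟩,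
    ⟨simp0_mono ⟨_, sector_mem hi, Or.inr (Or.inl rfl)⟩, right_mem_segment ..⟩⟩

theorem energy_lower (m : ℕ) (f : Pt → ℝ) (hA : ∀ p ∈ LsetT (m + 1) 2, f p = 0)
    (hB : ∀ p ∈ LsetT (m + 1) 5, f p = 1) :
    (5 / 4 : ℝ) ^ m / 8 ≤ energy (cT (m + 1)) f := by
  have key : ∀ i < 6, (5 / 4 : ℝ) ^ m * triE f (sector i) ≤ 4 * energy (cT (m + 1)) f := by
    intro i hi
    refine (energy_desc (area_sector i) f m).trans
      (sum_le_energy (good_desc (area_sector i) m) ?_ f)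
    have := desc_subset (m := 0) (sector_mem hi) m
    simpa using this
  have h2 := key 2 (by norm_num)
  have h5 := key 5 (by norm_num)
  have hsum : 1 ≤ triE f (sector 2) + triE f (sector 5) := by
    have a1 := hA _ (corner_mem (i := 2) (by norm_num) m).1
    have a2 := hA _ (corner_mem (i := 2) (by norm_num) m).2
    have b1 := hB _ (corner_mem (i := 5) (by norm_num) m).1
    have b2 := hB _ (corner_mem (i := 5) (by norm_num) m).2
    simp only [triE, sector, a1, a2, b1, b2]
    nlinarith [sq_nonneg (2 * f (0, 0) - 1)]
  have := mul_le_mul_of_nonneg_left hsum (by positivity : (0:ℝ) ≤ (5 / 4) ^ m)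
  linarith

/-- Upper bound on the 1-skeleton resistance. -/
theorem skeleton_upper :
    ∃ c : ℝ, 0 < c ∧ ∀ n : ℕ, 1 ≤ n → RT n ≤ c * (4 / 5 : ℝ) ^ n := by
  refine ⟨10, by norm_num, fun n hn => ?_⟩
  obtain ⟨m, rfl⟩ := Nat.exists_eq_add_of_le' hn
  have hpow : 10 * (4 / 5 : ℝ) ^ (m + 1) = ((5 / 4 : ℝ) ^ m / 8)⁻¹ := by
    rw [inv_div, pow_succ, show (4 / 5 : ℝ) = (5 / 4)⁻¹ by norm_num, inv_pow]
    ring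
  rw [RT, effRes, hpow]
  rcases Set.eq_empty_or_nonempty {e : ℝ | ∃ f : Pt → ℝ, (∀ p ∈ LsetT (m + 1) 2, f p = 0) ∧
      (∀ p ∈ LsetT (m + 1) 5, f p = 1) ∧ e = energy (cT (m + 1)) f} with h | h
  -- If no admissible potential existed, the left side would be `0⁻¹ = 0`.
  · rw [h, Real.sInf_empty, inv_zero]; positivity
  · refine inv_anti₀ (by positivity) (le_csInf h ?_)
    rintro e ⟨f, hA, hB, rfl⟩
    exact energy_lower m f hA hB

end BarycentricHexacarpet
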